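/- Suppose R ≠ 0, a ≠ 0, bx ≠ 0 and ax = at = aθ = 0. Then the kernel of the matrix M defined in the context is exactly the line spanned by the vector (cos θ₃, sin θ₃, 0, 0, 0). -/

import Mathlib

/-- The coordinate matrix of the 2-form ω = d(A·η + B·dt) at a point of the plug,
with rows/columns indexed by (θ₁, θ₂, θ₃, x, t); here a = A, aθ = ∂A/∂θ₃,
a_x = ∂A/∂x, a_t = ∂A/∂t, b_x = ∂B/∂x. -/
noncomputable def plugMatrix (R θ₃ a aθ a_x a_t b_x : ℝ) : Matrix (Fin 5) (Fin 5) ℝ :=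
  !![0, 0, -(R * Real.cos θ₃ * aθ - R * a * Real.sin θ₃), -(R * Real.cos θ₃ * a_x),
       -(R * Real.cos θ₃ * a_t);
     0, 0, -(R * Real.sin θ₃ * aθ + R * a * Real.cos θ₃), -(R * Real.sin θ₃ * a_x),
       -(R * Real.sin θ₃ * a_t);
     R * Real.cos θ₃ * aθ - R * a * Real.sin θ₃, R * Real.sin θ₃ * aθ + R * a * Real.cos θ₃,
       0, 0, 0;
     R * Real.cos θ₃ * a_x, R * Real.sin θ₃ * a_x, 0, 0, b_x;
     R * Real.cos θ₃ * a_t, R * Real.sin θ₃ * a_t, 0, -b_x, 0]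

/-!
A 2-form `ω` on a 5-dimensional space determines, through `ω ∧ ω = 2 ι_w vol`, a vector `w` whose
coordinates are the signed Pfaffians of the `4 × 4` principal submatrices of the matrix of `ω`.
Then `ι_w ω = 0`. Conversely, contracting with `v` gives `ω ∧ ι_v ω = ι_v ι_w vol`, so every `v` in
the kernel is parallel to `w`, and `w` spans the kernel as soon as it is nonzero.
For the plug matrix, `w` is `-R` times an explicit vector, which at a critical point of `A` is
`b_x * a` times `(cos θ₃, sin θ₃, 0, 0, 0)`.
-/

open Matrix

section Pfaffian

variable {K : Type*}

/-- The vector whose `i`-th coordinate is `(-1) ^ i` times the Pfaffian of the alternating `5 × 5`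
matrix `A` with row and column `i` deleted; it spans the kernel of `A` when nonzero. The remaining
indices are listed in the cyclic order `i + 1, …, i + 4` of `Fin 5`, whose parity relative to the
increasing order accounts for the sign. -/
def pfaffianVector [CommRing K] (A : Matrix (Fin 5) (Fin 5) K) : Fin 5 → K := fun i ↦
  A (i + 1) (i + 2) * A (i + 3) (i + 4) - A (i + 1) (i + 3) * A (i + 2) (i + 4) +
    A (i + 1) (i + 4) * A (i + 2) (i + 3)

section CommRing

variable [CommRing K] {A : Matrix (Fin 5) (Fin 5) K}

theorem mulVec_pfaffianVector (hA : Aᵀ = -A) (hdiag : A.diag = 0) :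
    A *ᵥ pfaffianVector A = 0 := by
  have hskew (i j) : A j i = -A i j := congrFun₂ hA i j
  have hzero (i) : A i i = 0 := congrFun hdiag i
  ext i
  simp only [mulVec, dotProduct, Pi.zero_apply, Fin.sum_univ_five, pfaffianVector]
  fin_cases i <;> simp only [Fin.zero_eta, Fin.mk_one, Fin.reduceFinMk, Fin.reduceAdd] <;> grind

-- Together with `pfaffianVector_mul_sub_add_two`: `ω ∧ ι_v ω = ι_v ι_w vol` in coordinates.
theorem pfaffianVector_mul_sub_add_one (hA : Aᵀ = -A) (hdiag : A.diag = 0) (v : Fin 5 → K)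
    (i : Fin 5) :
    pfaffianVector A i * v (i + 1) - pfaffianVector A (i + 1) * v i =
      A (i + 2) (i + 4) * (A *ᵥ v) (i + 3) - A (i + 3) (i + 4) * (A *ᵥ v) (i + 2) -
        A (i + 2) (i + 3) * (A *ᵥ v) (i + 4) := by
  have hskew (i j) : A j i = -A i j := congrFun₂ hA i j
  have hzero (i) : A i i = 0 := congrFun hdiag i
  simp only [mulVec, dotProduct, Fin.sum_univ_five, pfaffianVector]
  fin_cases i <;> simp only [Fin.zero_eta, Fin.mk_one, Fin.reduceFinMk, Fin.reduceAdd] <;> grind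

theorem pfaffianVector_mul_sub_add_two (hA : Aᵀ = -A) (hdiag : A.diag = 0) (v : Fin 5 → K)
    (i : Fin 5) :
    pfaffianVector A i * v (i + 2) - pfaffianVector A (i + 2) * v i =
      A (i + 3) (i + 4) * (A *ᵥ v) (i + 1) - A (i + 1) (i + 4) * (A *ᵥ v) (i + 3) +
        A (i + 1) (i + 3) * (A *ᵥ v) (i + 4) := by
  have hskew (i j) : A j i = -A i j := congrFun₂ hA i j
  have hzero (i) : A i i = 0 := congrFun hdiag i
  simp only [mulVec, dotProduct, Fin.sum_univ_five, pfaffianVector]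
  fin_cases i <;> simp only [Fin.zero_eta, Fin.mk_one, Fin.reduceFinMk, Fin.reduceAdd] <;> grind

theorem pfaffianVector_mul_comm_of_mulVec_eq_zero (hA : Aᵀ = -A) (hdiag : A.diag = 0)
    {v : Fin 5 → K} (hv : A *ᵥ v = 0) (i j : Fin 5) :
    pfaffianVector A i * v j = pfaffianVector A j * v i := by
  have hone (k) : pfaffianVector A k * v (k + 1) = pfaffianVector A (k + 1) * v k := by
    simpa [hv, sub_eq_zero] using pfaffianVector_mul_sub_add_one hA hdiag v k
  have htwo (k) : pfaffianVector A k * v (k + 2) = pfaffianVector A (k + 2) * v k := by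
    simpa [hv, sub_eq_zero] using pfaffianVector_mul_sub_add_two hA hdiag v k
  obtain ⟨d, rfl⟩ : ∃ d, j = i + d := ⟨j - i, by simp⟩
  fin_cases d
  · simp
  · exact hone i
  · exact htwo i
  · simpa [add_assoc] using (htwo (i + 3)).symm
  · simpa [add_assoc] using (hone (i + 4)).symm

end CommRing

theorem mem_span_singleton_of_forall_mul_eq_mul {ι : Type*} [Field K] {w v : ι → K} (hw : w ≠ 0)
    (h : ∀ i j, w i * v j = w j * v i) : v ∈ Submodule.span K {w} := by
  obtain ⟨i, hi⟩ := Function.ne_iff.mp hw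
  refine Submodule.mem_span_singleton.mpr ⟨v i / w i, funext fun j ↦ ?_⟩
  rw [Pi.smul_apply, smul_eq_mul, div_mul_eq_mul_div, div_eq_iff hi, mul_comm, ← h, mul_comm]

theorem ker_mulVecLin_eq_span_pfaffianVector [Field K] {A : Matrix (Fin 5) (Fin 5) K}
    (hA : Aᵀ = -A) (hdiag : A.diag = 0) (hw : pfaffianVector A ≠ 0) :
    LinearMap.ker A.mulVecLin = Submodule.span K {pfaffianVector A} := by
  apply le_antisymm
  · intro v hv
    exact mem_span_singleton_of_forall_mul_eq_mul hw
      (pfaffianVector_mul_comm_of_mulVec_eq_zero hA hdiag hv)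
  · rw [Submodule.span_singleton_le_iff_mem]
    exact mulVec_pfaffianVector hA hdiag

end Pfaffian

section Plug

variable (R θ₃ a aθ a_x a_t b_x : ℝ)

theorem transpose_plugMatrix :
    (plugMatrix R θ₃ a aθ a_x a_t b_x)ᵀ = -plugMatrix R θ₃ a aθ a_x a_t b_x := by
  ext i j
  fin_cases i <;> fin_cases j <;> simp [plugMatrix]

theorem diag_plugMatrix : (plugMatrix R θ₃ a aθ a_x a_t b_x).diag = 0 := by
  ext i
  fin_cases i <;> simp [plugMatrix]

/-- The direction of the kernel of `ω = d(A·η + B·dt)` at a point of the plug, in the coordinates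
`(θ₁, θ₂, θ₃, x, t)`: the Pfaffian vector of `plugMatrix` without its factor `-R`. -/
noncomputable def plugDirection : Fin 5 → ℝ :=
  ![b_x * (a * Real.cos θ₃ + aθ * Real.sin θ₃), b_x * (a * Real.sin θ₃ - aθ * Real.cos θ₃), 0,
    R * a * a_t, -(R * a * a_x)]

theorem pfaffianVector_plugMatrix :
    pfaffianVector (plugMatrix R θ₃ a aθ a_x a_t b_x) =
      -R • plugDirection R θ₃ a aθ a_x a_t b_x := by
  ext i
  have hcs := Real.sin_sq_add_cos_sq θ₃
  fin_cases i <;>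
    simp only [pfaffianVector, plugMatrix, plugDirection, of_apply, cons_val, Fin.zero_eta,
      Fin.mk_one, Fin.reduceFinMk, Fin.reduceAdd, Pi.smul_apply, smul_eq_mul]
  · ring
  · ring
  · ring
  · linear_combination -(R ^ 2 * a * a_t) * hcs
  · linear_combination R ^ 2 * a * a_x * hcs

theorem plugDirection_critical :
    plugDirection R θ₃ a 0 0 0 b_x =
      (b_x * a) • ![Real.cos θ₃, Real.sin θ₃, 0, 0, 0] := by
  simp [plugDirection, mul_assoc]

variable {R θ₃ a aθ a_x a_t b_x}

theorem plugDirection_ne_zero (ha : a ≠ 0) (hbx : b_x ≠ 0) :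
    plugDirection R θ₃ a aθ a_x a_t b_x ≠ 0 := by
  intro h
  have h₁ : a * Real.cos θ₃ + aθ * Real.sin θ₃ = 0 := by
    simpa [plugDirection, hbx] using congrFun h 0
  have h₂ : a * Real.sin θ₃ - aθ * Real.cos θ₃ = 0 := by
    simpa [plugDirection, hbx] using congrFun h 1
  apply ha
  linear_combination Real.cos θ₃ * h₁ + Real.sin θ₃ * h₂ - a * Real.sin_sq_add_cos_sq θ₃

end Plug

theorem stmt_6_general (R θ₃ a aθ a_x a_t b_x : ℝ) (hR : R ≠ 0)
    (hdir : plugDirection R θ₃ a aθ a_x a_t b_x ≠ 0) :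
    LinearMap.ker (plugMatrix R θ₃ a aθ a_x a_t b_x).mulVecLin
      = Submodule.span ℝ {plugDirection R θ₃ a aθ a_x a_t b_x} := by
  have hpf := pfaffianVector_plugMatrix R θ₃ a aθ a_x a_t b_x
  have hR' : -R ≠ 0 := neg_ne_zero.mpr hR
  rw [ker_mulVecLin_eq_span_pfaffianVector (transpose_plugMatrix ..) (diag_plugMatrix ..)
      (hpf ▸ smul_ne_zero hR' hdir),
    hpf, Submodule.span_singleton_smul_eq hR'.isUnit]

/-- If R ≠ 0, a ≠ 0, b_x ≠ 0 and a_x = a_t = aθ = 0, then the kernel of the plug matrix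
is exactly the line spanned by (cos θ₃, sin θ₃, 0, 0, 0). -/
theorem stmt_6 (R θ₃ a b_x : ℝ) (hR : R ≠ 0) (ha : a ≠ 0) (hbx : b_x ≠ 0) :
    LinearMap.ker (plugMatrix R θ₃ a 0 0 0 b_x).mulVecLin
      = Submodule.span ℝ {![Real.cos θ₃, Real.sin θ₃, 0, 0, 0]} := by
  rw [stmt_6_general R θ₃ a 0 0 0 b_x hR (plugDirection_ne_zero ha hbx), plugDirection_critical,
    Submodule.span_singleton_smul_eq (mul_ne_zero hbx ha).isUnit]
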